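/- There exists a function C : ℝ × ℝ → ℝ such that for every T > 0 and every smooth solution u of the 1-dimensional Schrödinger flow with Neumann boundary conditions on [0,T] with initial data u₀ = u(·,0), one has sup_{t ∈ [0,T]} ( ‖u(·,t)‖²_{H³} + ‖∂_t u(·,t)‖²_{H¹} ) ≤ C(‖u₀‖_{H³}, T). -/

import Mathlib

open MeasureTheory Set

noncomputable section

abbrev E3 := EuclideanSpace ℝ (Fin 3)

/-- The cross product on `EuclideanSpace ℝ (Fin 3)`. -/
def cross3 (a b : E3) : E3 :=
  (WithLp.equiv 2 (Fin 3 → ℝ)).symm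
    (crossProduct ((WithLp.equiv 2 (Fin 3 → ℝ)) a) ((WithLp.equiv 2 (Fin 3 → ℝ)) b))

/-- Partial derivative in the space variable of `u = u x t`. -/
def pdx (u : ℝ → ℝ → E3) : ℝ → ℝ → E3 := fun x t => deriv (fun y => u y t) x

/-- Partial derivative in the time variable of `u = u x t`. -/
def pdt (u : ℝ → ℝ → E3) : ℝ → ℝ → E3 := fun x t => deriv (fun s => u x s) t

/-- `u` is a smooth solution of the 1-dimensional Schrödinger flow with Neumann
boundary conditions on `[0,1] × [0,T]`. -/
def IsSol (T : ℝ) (u : ℝ → ℝ → E3) : Prop :=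
  ContDiff ℝ (⊤ : ℕ∞) (fun p : ℝ × ℝ => u p.1 p.2) ∧
  (∀ x ∈ Icc (0:ℝ) 1, ∀ t ∈ Icc (0:ℝ) T, ‖u x t‖ = 1) ∧
  (∀ x ∈ Icc (0:ℝ) 1, ∀ t ∈ Icc (0:ℝ) T, pdt u x t = cross3 (u x t) (pdx (pdx u) x t)) ∧
  (∀ t ∈ Icc (0:ℝ) T, pdx u 0 t = 0 ∧ pdx u 1 t = 0)

/-- Squared `L²` norm on `[0,1]`. -/
def L2sq (f : ℝ → E3) : ℝ := ∫ x in (0:ℝ)..1, ‖f x‖ ^ 2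

/-- Squared `H^k` Sobolev norm on `[0,1]`. -/
def Hsq (k : ℕ) (f : ℝ → E3) : ℝ :=
  ∑ j ∈ Finset.range (k + 1), ∫ x in (0:ℝ)..1, ‖deriv^[j] f x‖ ^ 2

/-!
The energy `∫ |u_x|²` is conserved, and so is `∫ |u_t|² - |u_x|⁴ / 4`; since
`|u_t|² = |u_xx|² - |u_x|⁴`, interpolating the quartic term between the energy and `∫ |u_xx|²`
bounds `u_xx` and `u_t` in `L²`, and `u_x` uniformly, for all times. At third order,
`d/dt ∫ |u_xt|² = 2 ∫ u_xt · (u_t × u_xxx)` looks cubic in the top order quantities. However,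
`u_t` is tangent to the sphere at `u`, while the components of `u_xt` and `u_xxx` along `u` are
`-u_x · u_t` and `-3 u_x · u_xx`. Three tangent vectors being coplanar, only products with one
such lower order component survive, so the right-hand side is at most linear in `∫ |u_xt|²` and
Grönwall's inequality applies. Differentiating the equation in time instead of space makes all
boundary terms vanish, because `u_xt` inherits the Neumann condition of `u_x`.
-/

open scoped RealInnerProductSpace ContDiff

section OneVariable

variable {a b : ℝ}

lemma eq_of_hasDerivAt_of_eqOn_Icc {E : Type*} [NormedAddCommGroup E] [NormedSpace ℝ E]
    {f g : ℝ → E} {f' g' : E} {x : ℝ} (hab : a < b) (hx : x ∈ Icc a b)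
    (hf : HasDerivAt f f' x) (hg : HasDerivAt g g' x) (h : EqOn f g (Icc a b)) : f' = g' :=
  (uniqueDiffOn_Icc hab x hx).eq_deriv _ hf.hasDerivWithinAt (hg.hasDerivWithinAt.congr h (h hx))

lemma eq_left_of_hasDerivAt_zero {E : Type*} [NormedAddCommGroup E] [NormedSpace ℝ E]
    {f : ℝ → E} (hf : ∀ x ∈ Icc a b, HasDerivAt f 0 x) : ∀ x ∈ Icc a b, f x = f a :=
  constant_of_has_deriv_right_zero (fun x hx => (hf x hx).continuousAt.continuousWithinAt)
    fun x hx => (hf x (Ico_subset_Icc_self hx)).hasDerivWithinAt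

lemma le_gronwallBound_of_hasDerivAt_le {f f' : ℝ → ℝ} {δ K ε : ℝ}
    (hf : ∀ x ∈ Icc a b, HasDerivAt f (f' x) x) (ha : f a ≤ δ)
    (bound : ∀ x ∈ Icc a b, f' x ≤ K * f x + ε) :
    ∀ x ∈ Icc a b, f x ≤ gronwallBound δ K ε (x - a) :=
  le_gronwallBound_of_liminf_deriv_right_le
    (fun x hx => (hf x hx).continuousAt.continuousWithinAt)
    (fun x hx _ hr => (hf x (Ico_subset_Icc_self hx)).hasDerivWithinAt.liminf_right_slope_le hr)
    ha fun x hx => bound x (Ico_subset_Icc_self hx)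

lemma integral_eq_of_eqOn_deriv_add {E : Type*} [NormedAddCommGroup E] [NormedSpace ℝ E]
    [CompleteSpace E] {g h h' s : ℝ → E} (hab : a ≤ b) (hh : ∀ x, HasDerivAt h (h' x) x)
    (hh' : Continuous h') (hs : Continuous s) (hg : EqOn g (fun x => h' x + s x) (Icc a b))
    (hbdry : h a = h b) : ∫ x in a..b, g x = ∫ x in a..b, s x := by
  rw [← uIcc_of_le hab] at hg
  rw [intervalIntegral.integral_congr hg, intervalIntegral.integral_add
    (hh'.intervalIntegrable _ _) (hs.intervalIntegrable _ _),
    intervalIntegral.integral_eq_sub_of_hasDerivAt (fun x _ => hh x) (hh'.intervalIntegrable _ _),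
    hbdry, sub_self, zero_add]

lemma hasDerivAt_integral_of_continuous {E : Type*} [NormedAddCommGroup E] [NormedSpace ℝ E]
    {F F' : ℝ → ℝ → E} (hF : ∀ t, Continuous fun x => F x t)
    (hF' : Continuous fun p : ℝ × ℝ => F' p.1 p.2)
    (hderiv : ∀ x t, HasDerivAt (F x) (F' x t) t) (t : ℝ) :
    HasDerivAt (fun s => ∫ x in a..b, F x s) (∫ x in a..b, F' x t) t := by
  obtain ⟨B, hB⟩ := (isCompact_uIcc.prod isCompact_Icc : IsCompact
    (uIcc a b ×ˢ Icc (t - 1) (t + 1))).exists_bound_of_continuousOn hF'.continuousOn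
  exact (intervalIntegral.hasDerivAt_integral_of_dominated_loc_of_deriv_le
    (F := fun s x => F x s) (F' := fun s x => F' x s) (bound := fun _ => B)
    (Icc_mem_nhds (by linarith) (by linarith))
    (.of_forall fun s => (hF s).aestronglyMeasurable) ((hF t).intervalIntegrable _ _)
    (hF'.comp (Continuous.prodMk_left t)).aestronglyMeasurable
    (.of_forall fun x hx s hs => hB (x, s) ⟨uIoc_subset_uIcc hx, hs⟩)
    intervalIntegrable_const (.of_forall fun x _ s _ => hderiv x s)).2

end OneVariable

lemma hasDerivAt_norm_pow_four {E : Type*} [NormedAddCommGroup E] [InnerProductSpace ℝ E]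
    {f : ℝ → E} {f' : E} {x : ℝ} (hf : HasDerivAt f f' x) :
    HasDerivAt (fun y => ‖f y‖ ^ 4) (4 * ‖f x‖ ^ 2 * ⟪f x, f'⟫) x := by
  have h : HasDerivAt (fun y => (‖f y‖ ^ 2) ^ 2) _ x := hf.norm_sq.pow 2
  simp only [← pow_mul] at h
  exact h.congr_deriv (by norm_num; ring)

section Agmon

variable {E : Type*} [NormedAddCommGroup E] [InnerProductSpace ℝ E] {f f' : ℝ → E} {a b x y ε : ℝ}

lemma abs_norm_sq_sub_norm_sq_le (hf : ∀ x, HasDerivAt f (f' x) x) (hf' : Continuous f')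
    (hx : x ∈ Icc a b) (hy : y ∈ Icc a b) :
    |‖f y‖ ^ 2 - ‖f x‖ ^ 2| ≤ ∫ z in a..b, 2 * ‖f z‖ * ‖f' z‖ := by
  wlog hxy : x ≤ y generalizing x y
  · rw [abs_sub_comm]
    exact this hy hx (le_of_not_ge hxy)
  have hcont : Continuous f := continuous_iff_continuousAt.2 fun x => (hf x).continuousAt
  have hbound : ∀ z, ‖2 * ⟪f z, f' z⟫‖ ≤ 2 * ‖f z‖ * ‖f' z‖ := fun z => by
    rw [norm_mul, Real.norm_two, mul_assoc]
    gcongr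
    exact norm_inner_le_norm _ _
  rw [← intervalIntegral.integral_eq_sub_of_hasDerivAt (fun z _ => (hf z).norm_sq)
    ((by fun_prop : Continuous _).intervalIntegrable _ _), ← Real.norm_eq_abs]
  calc ‖∫ z in x..y, 2 * ⟪f z, f' z⟫‖ ≤ ∫ z in x..y, 2 * ‖f z‖ * ‖f' z‖ :=
        intervalIntegral.norm_integral_le_of_norm_le hxy (.of_forall fun z _ => hbound z)
          ((by fun_prop : Continuous _).intervalIntegrable _ _)
    _ ≤ ∫ z in a..b, 2 * ‖f z‖ * ‖f' z‖ :=
        intervalIntegral.integral_mono_interval hx.1 hxy hy.2 (.of_forall fun z => by positivity)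
          ((by fun_prop : Continuous _).intervalIntegrable _ _)

lemma norm_sq_le_integral_add (hab : a < b) (hε : 0 < ε) (hf : ∀ x, HasDerivAt f (f' x) x)
    (hf' : Continuous f') (hx : x ∈ Icc a b) :
    ‖f x‖ ^ 2 ≤ ((b - a)⁻¹ + ε⁻¹) * (∫ y in a..b, ‖f y‖ ^ 2) + ε * ∫ y in a..b, ‖f' y‖ ^ 2 := by
  have hcont : Continuous f := continuous_iff_continuousAt.2 fun x => (hf x).continuousAt
  have hint : ∀ {g : ℝ → ℝ}, Continuous g → IntervalIntegrable g volume a b :=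
    fun hg => hg.intervalIntegrable _ _
  set J := ∫ z in a..b, 2 * ‖f z‖ * ‖f' z‖
  have haverage : (b - a) * ‖f x‖ ^ 2 ≤ (∫ y in a..b, ‖f y‖ ^ 2) + (b - a) * J := by
    calc (b - a) * ‖f x‖ ^ 2 = ∫ _ in a..b, ‖f x‖ ^ 2 := by simp
      _ ≤ ∫ y in a..b, (‖f y‖ ^ 2 + J) :=
        intervalIntegral.integral_mono_on hab.le intervalIntegrable_const (hint (by fun_prop))
          fun y hy => by
            linarith [(abs_le.1 (abs_norm_sq_sub_norm_sq_le hf hf' hx hy)).1]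
      _ = (∫ y in a..b, ‖f y‖ ^ 2) + (b - a) * J := by
        rw [intervalIntegral.integral_add (hint (by fun_prop)) intervalIntegrable_const]
        simp
  have hyoung : J ≤ ε⁻¹ * (∫ y in a..b, ‖f y‖ ^ 2) + ε * ∫ y in a..b, ‖f' y‖ ^ 2 := by
    rw [← intervalIntegral.integral_const_mul, ← intervalIntegral.integral_const_mul,
      ← intervalIntegral.integral_add (hint (by fun_prop)) (hint (by fun_prop))]
    refine intervalIntegral.integral_mono_on hab.le (hint (by fun_prop)) (hint (by fun_prop))
      fun y _ => ?_
    have hsq : 0 ≤ ε⁻¹ * (‖f y‖ - ε * ‖f' y‖) ^ 2 := by positivity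
    have hexpand : ε⁻¹ * (‖f y‖ - ε * ‖f' y‖) ^ 2
        = ε⁻¹ * ‖f y‖ ^ 2 + ε * ‖f' y‖ ^ 2 - 2 * ‖f y‖ * ‖f' y‖ := by field_simp; ring
    linarith
  have hpos : 0 < b - a := sub_pos.2 hab
  calc ‖f x‖ ^ 2 = (b - a)⁻¹ * ((b - a) * ‖f x‖ ^ 2) := by field_simp
    _ ≤ (b - a)⁻¹ * ((∫ y in a..b, ‖f y‖ ^ 2) + (b - a) * J) := by gcongr
    _ = (b - a)⁻¹ * (∫ y in a..b, ‖f y‖ ^ 2) + J := by field_simp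
    _ ≤ _ := by linarith

lemma integral_norm_pow_four_le (hab : a < b) (hε : 0 < ε) (hf : ∀ x, HasDerivAt f (f' x) x)
    (hf' : Continuous f') :
    ∫ x in a..b, ‖f x‖ ^ 4 ≤ (((b - a)⁻¹ + ε⁻¹) * (∫ x in a..b, ‖f x‖ ^ 2)
      + ε * ∫ x in a..b, ‖f' x‖ ^ 2) * ∫ x in a..b, ‖f x‖ ^ 2 := by
  have hcont : Continuous f := continuous_iff_continuousAt.2 fun x => (hf x).continuousAt
  rw [← intervalIntegral.integral_const_mul]
  refine intervalIntegral.integral_mono_on hab.le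
    ((by fun_prop : Continuous _).intervalIntegrable _ _)
    ((by fun_prop : Continuous _).intervalIntegrable _ _) fun x hx => ?_
  calc ‖f x‖ ^ 4 = ‖f x‖ ^ 2 * ‖f x‖ ^ 2 := by ring
    _ ≤ _ := by
      gcongr
      exact norm_sq_le_integral_add hab hε hf hf' hx

end Agmon

section CrossProduct

variable (a b c d : E3)

lemma inner_eq_dotProduct : ⟪a, b⟫ = a.ofLp ⬝ᵥ b.ofLp := by
  rw [EuclideanSpace.inner_eq_star_dotProduct, star_trivial, dotProduct_comm]

lemma inner_self_cross3 : ⟪a, cross3 a b⟫ = 0 := by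
  rw [inner_eq_dotProduct]
  exact dot_self_cross _ _

lemma inner_cross3_self : ⟪b, cross3 a b⟫ = 0 := by
  rw [inner_eq_dotProduct]
  exact dot_cross_self _ _

lemma inner_cross3_cross3 :
    ⟪cross3 a b, cross3 c d⟫ = ⟪a, c⟫ * ⟪b, d⟫ - ⟪a, d⟫ * ⟪b, c⟫ := by
  simp only [inner_eq_dotProduct]
  exact cross_dot_cross _ _ _ _

lemma inner_cross3_cyclic : ⟪a, cross3 b c⟫ = ⟪b, cross3 c a⟫ := by
  simp only [inner_eq_dotProduct]
  exact triple_product_permutation _ _ _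

lemma cross3_anticomm : -cross3 a b = cross3 b a := by
  ext i
  exact congrFun (cross_anticomm a.ofLp b.ofLp) i

lemma norm_cross3_sq : ‖cross3 a b‖ ^ 2 = ‖a‖ ^ 2 * ‖b‖ ^ 2 - ⟪a, b⟫ ^ 2 := by
  rw [← real_inner_self_eq_norm_sq, inner_cross3_cross3, real_inner_self_eq_norm_sq,
    real_inner_self_eq_norm_sq, real_inner_comm b a]
  ring

lemma norm_cross3_le : ‖cross3 a b‖ ≤ ‖a‖ * ‖b‖ := by
  refine le_of_sq_le_sq ?_ (by positivity)
  rw [norm_cross3_sq, mul_pow]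
  exact sub_le_self _ (sq_nonneg _)

lemma abs_inner_cross3_le : |⟪a, cross3 b c⟫| ≤ ‖a‖ * (‖b‖ * ‖c‖) :=
  (abs_real_inner_le_norm _ _).trans (by gcongr; exact norm_cross3_le _ _)

-- Cramer's rule for `d` in terms of `a, b, c`, paired with `d` itself.
lemma inner_self_mul_inner_cross3 : ⟪d, d⟫ * ⟪a, cross3 b c⟫
    = ⟪d, a⟫ * ⟪d, cross3 b c⟫ + ⟪d, b⟫ * ⟪d, cross3 c a⟫ + ⟪d, c⟫ * ⟪d, cross3 a b⟫ := by
  simp only [cross3, WithLp.equiv_apply, WithLp.equiv_symm_apply, inner_eq_dotProduct,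
    cross_apply, Matrix.vec3_dotProduct, Matrix.cons_val]
  ring

lemma isBoundedBilinearMap_cross3 :
    IsBoundedBilinearMap ℝ fun p : E3 × E3 => cross3 p.1 p.2 where
  add_left a₁ a₂ b := by simp [cross3]
  smul_left r a b := by simp [cross3]
  add_right a b₁ b₂ := by simp [cross3]
  smul_right r a b := by simp [cross3]
  bound := ⟨1, one_pos, fun a b => by simpa using norm_cross3_le a b⟩

@[fun_prop]
lemma continuous_cross3 {X : Type*} [TopologicalSpace X] {f g : X → E3} (hf : Continuous f)
    (hg : Continuous g) : Continuous fun x => cross3 (f x) (g x) :=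
  isBoundedBilinearMap_cross3.continuous.comp (hf.prodMk hg)

lemma hasDerivAt_cross3 {f g : ℝ → E3} {f' g' : E3} {x : ℝ} (hf : HasDerivAt f f' x)
    (hg : HasDerivAt g g' x) :
    HasDerivAt (fun y => cross3 (f y) (g y)) (cross3 (f x) g' + cross3 f' (g x)) x := by
  have h := (isBoundedBilinearMap_cross3.hasFDerivAt (f x, g x)).comp_hasDerivAt x (hf.prodMk hg)
  exact h

end CrossProduct

/-- Smoothness of a vector field depending on space and time, jointly in both variables. -/
def JointlySmooth (f : ℝ → ℝ → E3) : Prop := ContDiff ℝ ∞ ↿f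

section PartialDerivatives

variable {f : ℝ → ℝ → E3}

lemma hasDerivAt_pdx (hf : Differentiable ℝ ↿f) (x t : ℝ) :
    HasDerivAt (fun y => f y t) (pdx f x t) x :=
  (hf.comp (by fun_prop : Differentiable ℝ fun y : ℝ => (y, t))).differentiableAt.hasDerivAt

lemma hasDerivAt_pdt (hf : Differentiable ℝ ↿f) (x t : ℝ) :
    HasDerivAt (f x) (pdt f x t) t :=
  (hf.comp (by fun_prop : Differentiable ℝ fun s : ℝ => (x, s))).differentiableAt.hasDerivAt

lemma uncurry_pdx_eq_fderiv (hf : Differentiable ℝ ↿f) :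
    ↿(pdx f) = fun p => fderiv ℝ ↿f p (1, 0) :=
  funext fun p => (HasFDerivAt.comp_hasDerivAt (f := fun y => (y, p.2)) p.1 (hf p).hasFDerivAt
    ((hasDerivAt_id p.1).prodMk (hasDerivAt_const p.1 p.2))).deriv

lemma uncurry_pdt_eq_fderiv (hf : Differentiable ℝ ↿f) :
    ↿(pdt f) = fun p => fderiv ℝ ↿f p (0, 1) :=
  funext fun p => (HasFDerivAt.comp_hasDerivAt (f := fun s => (p.1, s)) p.2 (hf p).hasFDerivAt
    ((hasDerivAt_const p.2 p.1).prodMk (hasDerivAt_id p.2))).deriv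

lemma contDiff_pdx {m n : ℕ∞ω} (hf : ContDiff ℝ n ↿f) (hmn : m + 1 ≤ n) :
    ContDiff ℝ m ↿(pdx f) := by
  rw [uncurry_pdx_eq_fderiv (hf.differentiable (by rintro rfl; simp at hmn))]
  exact (hf.fderiv_right hmn).clm_apply contDiff_const

lemma contDiff_pdt {m n : ℕ∞ω} (hf : ContDiff ℝ n ↿f) (hmn : m + 1 ≤ n) :
    ContDiff ℝ m ↿(pdt f) := by
  rw [uncurry_pdt_eq_fderiv (hf.differentiable (by rintro rfl; simp at hmn))]
  exact (hf.fderiv_right hmn).clm_apply contDiff_const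

lemma pdt_pdx (hf : ContDiff ℝ 2 ↿f) : pdt (pdx f) = pdx (pdt f) := by
  have hf₁ : Differentiable ℝ ↿f := hf.differentiable (by simp)
  have hfx : Differentiable ℝ ↿(pdx f) :=
    (contDiff_pdx (m := 1) hf (by norm_num)).differentiable (by simp)
  have hft : Differentiable ℝ ↿(pdt f) :=
    (contDiff_pdt (m := 1) hf (by norm_num)).differentiable (by simp)
  have hdf : Differentiable ℝ (fderiv ℝ ↿f) :=
    (hf.fderiv_right (m := 1) (by norm_num)).differentiable (by simp)
  have hsymm (p : ℝ × ℝ) : IsSymmSndFDerivAt ℝ ↿f p := hf.contDiffAt.isSymmSndFDerivAt (by simp)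
  have huncurry : (↿(pdt (pdx f)) : ℝ × ℝ → E3) = ↿(pdx (pdt f)) := by
    rw [uncurry_pdt_eq_fderiv hfx, uncurry_pdx_eq_fderiv hft, uncurry_pdx_eq_fderiv hf₁,
      uncurry_pdt_eq_fderiv hf₁]
    funext p
    rw [fderiv_clm_apply (hdf p) (differentiableAt_const _),
      fderiv_clm_apply (hdf p) (differentiableAt_const _)]
    simpa using (hsymm p).eq (0, 1) (1, 0)
  funext x t
  exact congrFun huncurry (x, t)

end PartialDerivatives

namespace JointlySmooth

variable {f : ℝ → ℝ → E3}

protected lemma pdx (hf : JointlySmooth f) : JointlySmooth (pdx f) := contDiff_pdx hf le_rfl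

protected lemma pdt (hf : JointlySmooth f) : JointlySmooth (pdt f) := contDiff_pdt hf le_rfl

lemma pdt_pdx_comm (hf : JointlySmooth f) : pdt (pdx f) = pdx (pdt f) :=
  pdt_pdx (ContDiff.of_le hf (WithTop.coe_le_coe.2 le_top))

lemma hasDerivAt_x (hf : JointlySmooth f) (x t : ℝ) :
    HasDerivAt (fun y => f y t) (pdx f x t) x :=
  hasDerivAt_pdx (ContDiff.differentiable hf (by simp)) x t

lemma hasDerivAt_t (hf : JointlySmooth f) (x t : ℝ) :
    HasDerivAt (f x) (pdt f x t) t :=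
  hasDerivAt_pdt (ContDiff.differentiable hf (by simp)) x t

protected lemma continuous (hf : JointlySmooth f) : Continuous fun p : ℝ × ℝ => f p.1 p.2 :=
  ContDiff.continuous hf

lemma continuous_x (hf : JointlySmooth f) (t : ℝ) : Continuous fun x => f x t :=
  hf.continuous.comp (Continuous.prodMk_left t)

end JointlySmooth

section SobolevNorms

variable {f g h : ℝ → E3} {a b : ℝ}

lemma L2sq_nonneg (f : ℝ → E3) : 0 ≤ L2sq f :=
  intervalIntegral.integral_nonneg zero_le_one fun _ _ => by positivity

lemma L2sq_le_of_norm_sq_le (hf : Continuous f) (hg : Continuous g) (hh : Continuous h)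
    (hle : ∀ x ∈ Icc (0 : ℝ) 1, ‖f x‖ ^ 2 ≤ a * ‖g x‖ ^ 2 + b * ‖h x‖ ^ 2) :
    L2sq f ≤ a * L2sq g + b * L2sq h := by
  unfold L2sq
  rw [← intervalIntegral.integral_const_mul, ← intervalIntegral.integral_const_mul,
    ← intervalIntegral.integral_add ((by fun_prop : Continuous _).intervalIntegrable _ _)
      ((by fun_prop : Continuous _).intervalIntegrable _ _)]
  exact intervalIntegral.integral_mono_on zero_le_one
    ((by fun_prop : Continuous _).intervalIntegrable _ _)
    ((by fun_prop : Continuous _).intervalIntegrable _ _) hle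

lemma L2sq_iterate_deriv_le_Hsq {j k : ℕ} (f : ℝ → E3) (hjk : j ≤ k) :
    L2sq (deriv^[j] f) ≤ Hsq k f :=
  Finset.single_le_sum (f := fun i => L2sq (deriv^[i] f)) (fun _ _ => L2sq_nonneg _)
    (Finset.mem_range.2 (Nat.lt_succ_of_le hjk))

lemma Hsq_one_eq (f : ℝ → E3) : Hsq 1 f = L2sq f + L2sq (deriv f) := by
  simp only [Hsq, Finset.sum_range_succ, Finset.sum_range_zero, zero_add]
  rfl

lemma Hsq_three_eq (f : ℝ → E3) :
    Hsq 3 f = L2sq f + L2sq (deriv f) + L2sq (deriv (deriv f))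
      + L2sq (deriv (deriv (deriv f))) := by
  simp only [Hsq, Finset.sum_range_succ, Finset.sum_range_zero, zero_add]
  rfl

end SobolevNorms

namespace JointlySmooth

variable {f : ℝ → ℝ → E3} {ε T t x : ℝ}

lemma pdx_pdt_eq_zero (hf : JointlySmooth f) (hT : 0 < T) (ht : t ∈ Icc 0 T)
    (h : ∀ s ∈ Icc 0 T, pdx f x s = 0) : pdx (pdt f) x t = 0 := by
  rw [← hf.pdt_pdx_comm]
  exact eq_of_hasDerivAt_of_eqOn_Icc hT ht (hf.pdx.hasDerivAt_t x t) (hasDerivAt_const t 0) h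

lemma norm_sq_le (hf : JointlySmooth f) (hε : 0 < ε) (hx : x ∈ Icc (0 : ℝ) 1) (t : ℝ) :
    ‖f x t‖ ^ 2 ≤ (1 + ε⁻¹) * L2sq (fun y => f y t)
      + ε * L2sq (fun y => pdx f y t) := by
  simpa [L2sq] using norm_sq_le_integral_add zero_lt_one hε (fun y => hf.hasDerivAt_x y t)
    (hf.pdx.continuous_x t) hx

protected lemma integral_norm_pow_four_le (hf : JointlySmooth f) (hε : 0 < ε) (t : ℝ) :
    ∫ x in (0 : ℝ)..1, ‖f x t‖ ^ 4 ≤ ((1 + ε⁻¹) * L2sq (fun y => f y t)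
      + ε * L2sq (fun y => pdx f y t)) * L2sq (fun y => f y t) := by
  simpa [L2sq] using integral_norm_pow_four_le zero_lt_one hε (fun y => hf.hasDerivAt_x y t)
    (hf.pdx.continuous_x t)

lemma hasDerivAt_L2sq (hf : JointlySmooth f) (t : ℝ) :
    HasDerivAt (fun s => L2sq fun x => f x s)
      (∫ x in (0 : ℝ)..1, 2 * ⟪f x t, pdt f x t⟫) t :=
  hasDerivAt_integral_of_continuous (fun s => (hf.continuous_x s).norm.pow 2)
    (continuous_const.mul (hf.continuous.inner hf.pdt.continuous))
    (fun x s => (hf.hasDerivAt_t x s).norm_sq) t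

end JointlySmooth

namespace IsSol

variable {T t x : ℝ} {u : ℝ → ℝ → E3}

section PointwiseIdentities

lemma jointlySmooth (hu : IsSol T u) : JointlySmooth u := hu.1

lemma pdt_eq (hu : IsSol T u) (hx : x ∈ Icc 0 1) (ht : t ∈ Icc 0 T) :
    pdt u x t = cross3 (u x t) (pdx (pdx u) x t) := hu.2.2.1 x hx t ht

lemma norm_eq_one (hu : IsSol T u) (hx : x ∈ Icc 0 1) (ht : t ∈ Icc 0 T) : ‖u x t‖ = 1 :=
  hu.2.1 x hx t ht

lemma inner_self (hu : IsSol T u) (hx : x ∈ Icc 0 1) (ht : t ∈ Icc 0 T) :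
    ⟪u x t, u x t⟫ = 1 := by
  rw [real_inner_self_eq_norm_sq, hu.norm_eq_one hx ht, one_pow]

lemma inner_self_pdx (hu : IsSol T u) (hx : x ∈ Icc 0 1) (ht : t ∈ Icc 0 T) :
    ⟪u x t, pdx u x t⟫ = 0 := by
  have hux := hu.jointlySmooth.hasDerivAt_x x t
  have h := eq_of_hasDerivAt_of_eqOn_Icc one_pos hx (hux.inner ℝ hux) (hasDerivAt_const x 1)
    fun y hy => hu.inner_self hy ht
  rw [real_inner_comm (u x t)] at h
  linarith

lemma inner_self_pdx_pdx (hu : IsSol T u) (hx : x ∈ Icc 0 1) (ht : t ∈ Icc 0 T) :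
    ⟪u x t, pdx (pdx u) x t⟫ = -‖pdx u x t‖ ^ 2 := by
  have hs := hu.jointlySmooth
  have h := eq_of_hasDerivAt_of_eqOn_Icc one_pos hx
    ((hs.hasDerivAt_x x t).inner ℝ (hs.pdx.hasDerivAt_x x t)) (hasDerivAt_const x 0)
    fun y hy => hu.inner_self_pdx hy ht
  rw [real_inner_self_eq_norm_sq] at h
  linarith

lemma inner_self_pdx_pdx_pdx (hu : IsSol T u) (hx : x ∈ Icc 0 1) (ht : t ∈ Icc 0 T) :
    ⟪u x t, pdx (pdx (pdx u)) x t⟫ = -3 * ⟪pdx u x t, pdx (pdx u) x t⟫ := by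
  have hs := hu.jointlySmooth
  have h := eq_of_hasDerivAt_of_eqOn_Icc one_pos hx
    ((hs.hasDerivAt_x x t).inner ℝ (hs.pdx.pdx.hasDerivAt_x x t))
    (hs.pdx.hasDerivAt_x x t).norm_sq.neg fun y hy => hu.inner_self_pdx_pdx hy ht
  linarith

lemma inner_self_pdt (hu : IsSol T u) (hx : x ∈ Icc 0 1) (ht : t ∈ Icc 0 T) :
    ⟪u x t, pdt u x t⟫ = 0 := by
  rw [hu.pdt_eq hx ht, inner_self_cross3]

lemma inner_pdx_pdx_pdt (hu : IsSol T u) (hx : x ∈ Icc 0 1) (ht : t ∈ Icc 0 T) :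
    ⟪pdx (pdx u) x t, pdt u x t⟫ = 0 := by
  rw [hu.pdt_eq hx ht, inner_cross3_self]

lemma inner_self_pdx_pdt (hu : IsSol T u) (hx : x ∈ Icc 0 1) (ht : t ∈ Icc 0 T) :
    ⟪u x t, pdx (pdt u) x t⟫ = -⟪pdx u x t, pdt u x t⟫ := by
  have hs := hu.jointlySmooth
  have h := eq_of_hasDerivAt_of_eqOn_Icc one_pos hx
    ((hs.hasDerivAt_x x t).inner ℝ (hs.pdt.hasDerivAt_x x t)) (hasDerivAt_const x 0)
    fun y hy => hu.inner_self_pdt hy ht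
  linarith

lemma pdx_pdt_eq (hu : IsSol T u) (hx : x ∈ Icc 0 1) (ht : t ∈ Icc 0 T) :
    pdx (pdt u) x t = cross3 (u x t) (pdx (pdx (pdx u)) x t)
      + cross3 (pdx u x t) (pdx (pdx u) x t) := by
  have hs := hu.jointlySmooth
  exact eq_of_hasDerivAt_of_eqOn_Icc one_pos hx (hs.pdt.hasDerivAt_x x t)
    (hasDerivAt_cross3 (hs.hasDerivAt_x x t) (hs.pdx.pdx.hasDerivAt_x x t))
    fun y hy => hu.pdt_eq hy ht

lemma pdt_pdt_eq (hu : IsSol T u) (hT : 0 < T) (hx : x ∈ Icc 0 1) (ht : t ∈ Icc 0 T) :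
    pdt (pdt u) x t = cross3 (u x t) (pdx (pdx (pdt u)) x t)
      + cross3 (pdt u x t) (pdx (pdx u) x t) := by
  have hs := hu.jointlySmooth
  have h := eq_of_hasDerivAt_of_eqOn_Icc hT ht (hs.pdt.hasDerivAt_t x t)
    (hasDerivAt_cross3 (hs.hasDerivAt_t x t) (hs.pdx.pdx.hasDerivAt_t x t))
    fun s hsT => hu.pdt_eq hx hsT
  rwa [hs.pdx.pdt_pdx_comm, hs.pdt_pdx_comm] at h

lemma pdt_pdx_pdt_eq (hu : IsSol T u) (hT : 0 < T) (hx : x ∈ Icc 0 1) (ht : t ∈ Icc 0 T) :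
    pdt (pdx (pdt u)) x t = cross3 (u x t) (pdx (pdx (pdx (pdt u))) x t)
      + cross3 (pdx u x t) (pdx (pdx (pdt u)) x t)
      + (cross3 (pdt u x t) (pdx (pdx (pdx u)) x t)
        + cross3 (pdx (pdt u) x t) (pdx (pdx u) x t)) := by
  have hs := hu.jointlySmooth
  rw [hs.pdt.pdt_pdx_comm]
  exact eq_of_hasDerivAt_of_eqOn_Icc one_pos hx (hs.pdt.pdt.hasDerivAt_x x t)
    ((hasDerivAt_cross3 (hs.hasDerivAt_x x t) (hs.pdt.pdx.pdx.hasDerivAt_x x t)).add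
      (hasDerivAt_cross3 (hs.pdt.hasDerivAt_x x t) (hs.pdx.pdx.hasDerivAt_x x t)))
    fun y hy => hu.pdt_pdt_eq hT hy ht

lemma pdx_apply_zero (hu : IsSol T u) (ht : t ∈ Icc 0 T) : pdx u 0 t = 0 := (hu.2.2.2 t ht).1

lemma pdx_apply_one (hu : IsSol T u) (ht : t ∈ Icc 0 T) : pdx u 1 t = 0 := (hu.2.2.2 t ht).2

lemma pdx_pdt_apply_zero (hu : IsSol T u) (hT : 0 < T) (ht : t ∈ Icc 0 T) :
    pdx (pdt u) 0 t = 0 :=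
  hu.jointlySmooth.pdx_pdt_eq_zero hT ht fun _ hs => hu.pdx_apply_zero hs

lemma pdx_pdt_apply_one (hu : IsSol T u) (hT : 0 < T) (ht : t ∈ Icc 0 T) :
    pdx (pdt u) 1 t = 0 :=
  hu.jointlySmooth.pdx_pdt_eq_zero hT ht fun _ hs => hu.pdx_apply_one hs

end PointwiseIdentities

section BalanceLaws

lemma hasDerivAt_L2sq_pdx (hu : IsSol T u) (ht : t ∈ Icc 0 T) :
    HasDerivAt (fun s => L2sq fun x => pdx u x s) 0 t := by
  have hs := hu.jointlySmooth
  have hcx := hs.pdx.continuous_x t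
  have hcxx := hs.pdx.pdx.continuous_x t
  have hct := hs.pdt.continuous_x t
  have hctx := hs.pdt.pdx.continuous_x t
  have hflux : ∀ x, HasDerivAt (fun y => 2 * ⟪pdx u y t, pdt u y t⟫) _ x := fun x =>
    ((hs.pdx.hasDerivAt_x x t).inner ℝ (hs.pdt.hasDerivAt_x x t)).const_mul 2
  refine (hs.pdx.hasDerivAt_L2sq t).congr_deriv ?_
  rw [integral_eq_of_eqOn_deriv_add zero_le_one hflux (by fun_prop)
    (continuous_const (y := (0 : ℝ))) (fun x hx => ?_)
    (by simp [hu.pdx_apply_zero ht, hu.pdx_apply_one ht]),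
    intervalIntegral.integral_zero]
  simp only [hs.pdt_pdx_comm, hu.inner_pdx_pdx_pdt hx ht, add_zero]

lemma inner_pdt_cross3_pdx_pdx_pdt (hu : IsSol T u) (hx : x ∈ Icc 0 1) (ht : t ∈ Icc 0 T) :
    ⟪pdt u x t, cross3 (pdx u x t) (pdx (pdt u) x t)⟫
      = ⟪pdx u x t, pdx (pdx u) x t⟫ * ⟪pdx u x t, pdt u x t⟫ := by
  conv_lhs => rw [hu.pdt_eq hx ht]
  rw [inner_cross3_cross3, hu.inner_self_pdx hx ht, hu.inner_self_pdx_pdt hx ht,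
    real_inner_comm (pdx u x t) (pdx (pdx u) x t)]
  ring

lemma hasDerivAt_integral_norm_pdt_sq_sub (hu : IsSol T u) (hT : 0 < T) (ht : t ∈ Icc 0 T) :
    HasDerivAt (fun s => ∫ x in (0 : ℝ)..1, (‖pdt u x s‖ ^ 2 - ‖pdx u x s‖ ^ 4 / 4)) 0 t := by
  have hs := hu.jointlySmooth
  have hcu := hs.continuous_x t
  have hcx := hs.pdx.continuous_x
  have hcxx := hs.pdx.pdx.continuous_x t
  have hct := hs.pdt.continuous_x
  have hctx := hs.pdt.pdx.continuous_x t
  have hctxx := hs.pdt.pdx.pdx.continuous_x t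
  have hcont : Continuous fun p : ℝ × ℝ => 2 * ⟪pdt u p.1 p.2, pdt (pdt u) p.1 p.2⟫
      - 4 * ‖pdx u p.1 p.2‖ ^ 2 * ⟪pdx u p.1 p.2, pdt (pdx u) p.1 p.2⟫ / 4 := by
    have := hs.pdt.continuous
    have := hs.pdt.pdt.continuous
    have := hs.pdx.continuous
    have := hs.pdx.pdt.continuous
    fun_prop
  have hflux : ∀ x, HasDerivAt (fun y => 2 * ⟪pdt u y t, cross3 (u y t) (pdx (pdt u) y t)⟫
      - ‖pdx u y t‖ ^ 2 * ⟪pdx u y t, pdt u y t⟫) _ x := fun x =>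
    (((hs.pdt.hasDerivAt_x x t).inner ℝ (hasDerivAt_cross3 (hs.hasDerivAt_x x t)
      (hs.pdt.pdx.hasDerivAt_x x t))).const_mul 2).sub
    ((hs.pdx.hasDerivAt_x x t).norm_sq.mul
      ((hs.pdx.hasDerivAt_x x t).inner ℝ (hs.pdt.hasDerivAt_x x t)))
  refine (hasDerivAt_integral_of_continuous (by fun_prop) hcont (fun x s =>
    (hs.pdt.hasDerivAt_t x s).norm_sq.sub
      ((hasDerivAt_norm_pow_four (hs.pdx.hasDerivAt_t x s)).div_const 4)) t).congr_deriv ?_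
  rw [integral_eq_of_eqOn_deriv_add zero_le_one hflux (by fun_prop)
    (continuous_const (y := (0 : ℝ))) (fun x hx => ?_)
    (by simp [cross3, hu.pdx_apply_zero ht, hu.pdx_apply_one ht, hu.pdx_pdt_apply_zero hT ht,
      hu.pdx_pdt_apply_one hT ht]),
    intervalIntegral.integral_zero]
  simp only [hs.pdt_pdx_comm, hu.pdt_pdt_eq hT hx ht, inner_add_right, inner_self_cross3,
    inner_cross3_self, hu.inner_pdx_pdx_pdt hx ht, hu.inner_pdt_cross3_pdx_pdx_pdt hx ht]
  ring

lemma hasDerivAt_L2sq_pdx_pdt (hu : IsSol T u) (hT : 0 < T) (ht : t ∈ Icc 0 T) :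
    HasDerivAt (fun s => L2sq fun x => pdx (pdt u) x s)
      (∫ x in (0 : ℝ)..1,
        2 * ⟪pdx (pdt u) x t, cross3 (pdt u x t) (pdx (pdx (pdx u)) x t)⟫) t := by
  have hs := hu.jointlySmooth
  have hcu := hs.continuous_x t
  have hcx := hs.pdx.continuous_x t
  have hcxxx := hs.pdx.pdx.pdx.continuous_x t
  have hct := hs.pdt.continuous_x t
  have hctx := hs.pdt.pdx.continuous_x t
  have hctxx := hs.pdt.pdx.pdx.continuous_x t
  have hctxxx := hs.pdt.pdx.pdx.pdx.continuous_x t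
  have hflux : ∀ x, HasDerivAt
      (fun y => 2 * ⟪pdx (pdt u) y t, cross3 (u y t) (pdx (pdx (pdt u)) y t)⟫) _ x := fun x =>
    ((hs.pdt.pdx.hasDerivAt_x x t).inner ℝ (hasDerivAt_cross3 (hs.hasDerivAt_x x t)
      (hs.pdt.pdx.pdx.hasDerivAt_x x t))).const_mul 2
  refine (hs.pdt.pdx.hasDerivAt_L2sq t).congr_deriv ?_
  refine integral_eq_of_eqOn_deriv_add zero_le_one hflux (by fun_prop) (by fun_prop)
    (fun x hx => ?_) (by simp [hu.pdx_pdt_apply_zero hT ht, hu.pdx_pdt_apply_one hT ht])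
  simp only [hu.pdt_pdx_pdt_eq hT hx ht, inner_add_right, inner_self_cross3, inner_cross3_self]
  ring

end BalanceLaws

section PointwiseEstimates

lemma norm_pdt_sq (hu : IsSol T u) (hx : x ∈ Icc 0 1) (ht : t ∈ Icc 0 T) :
    ‖pdt u x t‖ ^ 2 = ‖pdx (pdx u) x t‖ ^ 2 - ‖pdx u x t‖ ^ 4 := by
  rw [hu.pdt_eq hx ht, norm_cross3_sq, hu.norm_eq_one hx ht, hu.inner_self_pdx_pdx hx ht]
  ring

lemma norm_cross3_self_pdx_pdx_pdx_le (hu : IsSol T u) (hx : x ∈ Icc 0 1) (ht : t ∈ Icc 0 T) :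
    ‖cross3 (u x t) (pdx (pdx (pdx u)) x t)‖
      ≤ ‖pdx (pdt u) x t‖ + ‖pdx u x t‖ * ‖pdx (pdx u) x t‖ := by
  rw [← add_sub_cancel_right (cross3 (u x t) _) (cross3 (pdx u x t) (pdx (pdx u) x t)),
    ← hu.pdx_pdt_eq hx ht]
  exact (norm_sub_le _ _).trans (by gcongr; exact norm_cross3_le _ _)

lemma abs_inner_self_pdx_pdx_pdx_le (hu : IsSol T u) (hx : x ∈ Icc 0 1) (ht : t ∈ Icc 0 T) :
    |⟪u x t, pdx (pdx (pdx u)) x t⟫| ≤ 3 * (‖pdx u x t‖ * ‖pdx (pdx u) x t‖) := by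
  rw [hu.inner_self_pdx_pdx_pdx hx ht, abs_mul, abs_neg, abs_of_pos three_pos]
  gcongr
  exact abs_real_inner_le_norm _ _

lemma norm_pdx_pdx_pdx_sq_le (hu : IsSol T u) (hx : x ∈ Icc 0 1) (ht : t ∈ Icc 0 T) :
    ‖pdx (pdx (pdx u)) x t‖ ^ 2
      ≤ 2 * ‖pdx (pdt u) x t‖ ^ 2 + 11 * (‖pdx u x t‖ ^ 2 * ‖pdx (pdx u) x t‖ ^ 2) := by
  have hsplit := norm_cross3_sq (u x t) (pdx (pdx (pdx u)) x t)
  rw [hu.norm_eq_one hx ht] at hsplit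
  have htangent := pow_le_pow_left₀ (norm_nonneg _) (hu.norm_cross3_self_pdx_pdx_pdx_le hx ht) 2
  have hnormal := sq_le_sq' (abs_le.1 (hu.abs_inner_self_pdx_pdx_pdx_le hx ht)).1
    (abs_le.1 (hu.abs_inner_self_pdx_pdx_pdx_le hx ht)).2
  have hyoung := add_sq_le (a := ‖pdx (pdt u) x t‖) (b := ‖pdx u x t‖ * ‖pdx (pdx u) x t‖)
  linarith [mul_pow ‖pdx u x t‖ ‖pdx (pdx u) x t‖ 2,
    mul_pow 3 (‖pdx u x t‖ * ‖pdx (pdx u) x t‖) 2]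

lemma norm_pdx_pdt_sq_le (hu : IsSol T u) (hx : x ∈ Icc 0 1) (ht : t ∈ Icc 0 T) :
    ‖pdx (pdt u) x t‖ ^ 2 ≤ 2 * (‖pdx u x t‖ ^ 2 * ‖pdx (pdx u) x t‖ ^ 2)
      + 2 * ‖pdx (pdx (pdx u)) x t‖ ^ 2 := by
  have hle : ‖pdx (pdt u) x t‖
      ≤ ‖pdx u x t‖ * ‖pdx (pdx u) x t‖ + ‖pdx (pdx (pdx u)) x t‖ := by
    rw [hu.pdx_pdt_eq hx ht, add_comm]
    refine (norm_add_le _ _).trans (add_le_add (norm_cross3_le _ _) ?_)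
    simpa [hu.norm_eq_one hx ht] using norm_cross3_le (u x t) (pdx (pdx (pdx u)) x t)
  calc ‖pdx (pdt u) x t‖ ^ 2
      ≤ (‖pdx u x t‖ * ‖pdx (pdx u) x t‖ + ‖pdx (pdx (pdx u)) x t‖) ^ 2 := by gcongr
    _ ≤ 2 * ((‖pdx u x t‖ * ‖pdx (pdx u) x t‖) ^ 2 + ‖pdx (pdx (pdx u)) x t‖ ^ 2) := add_sq_le
    _ = _ := by ring

-- Decomposing along `u` removes the top order factor `u_xt · (u_t × u_xxx)`: the tangential
-- parts of the three vectors are coplanar, and their normal parts are of lower order.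
lemma abs_inner_pdx_pdt_cross3_le (hu : IsSol T u) (hx : x ∈ Icc 0 1) (ht : t ∈ Icc 0 T) :
    |⟪pdx (pdt u) x t, cross3 (pdt u x t) (pdx (pdx (pdx u)) x t)⟫|
      ≤ ‖pdx u x t‖ * ‖pdt u x t‖ * (‖pdt u x t‖ * (‖pdx (pdt u) x t‖
          + ‖pdx u x t‖ * ‖pdx (pdx u) x t‖))
        + 3 * (‖pdx u x t‖ * ‖pdx (pdx u) x t‖) * (‖pdx (pdt u) x t‖ * ‖pdt u x t‖) := by
  have hdecomp := inner_self_mul_inner_cross3 (pdx (pdt u) x t) (pdt u x t)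
    (pdx (pdx (pdx u)) x t) (u x t)
  rw [hu.inner_self hx ht, hu.inner_self_pdt hx ht, hu.inner_self_pdx_pdt hx ht, one_mul, zero_mul,
    add_zero] at hdecomp
  have htriple : |⟪u x t, cross3 (pdt u x t) (pdx (pdx (pdx u)) x t)⟫|
      ≤ ‖pdt u x t‖ * (‖pdx (pdt u) x t‖ + ‖pdx u x t‖ * ‖pdx (pdx u) x t‖) := by
    rw [inner_cross3_cyclic, ← cross3_anticomm, inner_neg_right, abs_neg]
    exact (abs_real_inner_le_norm _ _).trans
      (by gcongr; exact hu.norm_cross3_self_pdx_pdx_pdx_le hx ht)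
  have hnormal : |⟪u x t, cross3 (pdx (pdt u) x t) (pdt u x t)⟫|
      ≤ ‖pdx (pdt u) x t‖ * ‖pdt u x t‖ := by
    simpa [hu.norm_eq_one hx ht] using abs_inner_cross3_le (u x t) (pdx (pdt u) x t) (pdt u x t)
  rw [hdecomp]
  refine (abs_add_le _ _).trans (add_le_add ?_ ?_)
  · rw [abs_mul, abs_neg]
    gcongr
    exact abs_real_inner_le_norm _ _
  · rw [abs_mul]
    gcongr
    exact hu.abs_inner_self_pdx_pdx_pdx_le hx ht

lemma two_mul_inner_pdx_pdt_cross3_le {K : ℝ} (hu : IsSol T u) (hx : x ∈ Icc 0 1)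
    (ht : t ∈ Icc 0 T) (hK : ‖pdx u x t‖ ^ 2 ≤ K) :
    2 * ⟪pdx (pdt u) x t, cross3 (pdt u x t) (pdx (pdx (pdx u)) x t)⟫
      ≤ 4 * ‖pdx (pdt u) x t‖ ^ 2 + 5 * K * ‖pdt u x t‖ ^ 4
        + (4 * K ^ 3 + K) * ‖pdt u x t‖ ^ 2 := by
  have hq := hu.norm_pdt_sq hx ht
  have htriple := (abs_le.1 (hu.abs_inner_pdx_pdt_cross3_le hx ht)).2
  set p := ‖pdx u x t‖
  set q := ‖pdx (pdx u) x t‖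
  set w := ‖pdt u x t‖
  set y := ‖pdx (pdt u) x t‖
  have : 0 ≤ K := (sq_nonneg p).trans hK
  have hpw : p ^ 2 * w ^ 2 ≤ K * w ^ 2 := by gcongr
  have hpw₄ : p ^ 2 * w ^ 4 ≤ K * w ^ 4 := by gcongr
  have hpqw : p ^ 2 * q ^ 2 * w ^ 2 ≤ K * w ^ 4 + K ^ 3 * w ^ 2 := by
    calc p ^ 2 * q ^ 2 * w ^ 2 = p ^ 2 * w ^ 4 + (p ^ 2) ^ 3 * w ^ 2 := by
          rw [← sub_add_cancel (q ^ 2) (p ^ 4), ← hq]; ring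
      _ ≤ K * w ^ 4 + K ^ 3 * w ^ 2 := by gcongr
  have hyoung₁ := two_mul_le_add_sq y (p * w ^ 2)
  have hyoung₂ := two_mul_le_add_sq (p * w) (p * q * w)
  have hyoung₃ := two_mul_le_add_sq y (p * q * w)
  linarith

end PointwiseEstimates

section IntegralEstimates

lemma L2sq_self (hu : IsSol T u) (ht : t ∈ Icc 0 T) : L2sq (fun x => u x t) = 1 := by
  unfold L2sq
  rw [intervalIntegral.integral_congr (g := fun _ => (1 : ℝ)), intervalIntegral.integral_const,
    sub_zero, one_smul]
  intro x hx
  rw [uIcc_of_le zero_le_one] at hx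
  simp only [hu.norm_eq_one hx ht, one_pow]

lemma L2sq_pdx_eq (hu : IsSol T u) (ht : t ∈ Icc 0 T) :
    L2sq (fun x => pdx u x t) = L2sq fun x => pdx u x 0 :=
  eq_left_of_hasDerivAt_zero (fun _ hs => hu.hasDerivAt_L2sq_pdx hs) t ht

lemma L2sq_pdt_eq (hu : IsSol T u) (ht : t ∈ Icc 0 T) :
    L2sq (fun x => pdt u x t)
      = L2sq (fun x => pdx (pdx u) x t) - ∫ x in (0 : ℝ)..1, ‖pdx u x t‖ ^ 4 := by
  have hcx := hu.jointlySmooth.pdx.continuous_x t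
  have hcxx := hu.jointlySmooth.pdx.pdx.continuous_x t
  unfold L2sq
  rw [← intervalIntegral.integral_sub ((by fun_prop : Continuous _).intervalIntegrable _ _)
    ((by fun_prop : Continuous _).intervalIntegrable _ _)]
  refine intervalIntegral.integral_congr fun x hx => ?_
  rw [uIcc_of_le zero_le_one] at hx
  exact hu.norm_pdt_sq hx ht

lemma L2sq_pdt_sub_eq (hu : IsSol T u) (hT : 0 < T) (ht : t ∈ Icc 0 T) :
    L2sq (fun x => pdt u x t) - (∫ x in (0 : ℝ)..1, ‖pdx u x t‖ ^ 4) / 4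
      = L2sq (fun x => pdt u x 0) - (∫ x in (0 : ℝ)..1, ‖pdx u x 0‖ ^ 4) / 4 := by
  have hsub (s : ℝ) : ∫ x in (0 : ℝ)..1, (‖pdt u x s‖ ^ 2 - ‖pdx u x s‖ ^ 4 / 4)
      = L2sq (fun x => pdt u x s) - (∫ x in (0 : ℝ)..1, ‖pdx u x s‖ ^ 4) / 4 := by
    have hcx := hu.jointlySmooth.pdx.continuous_x s
    have hct := hu.jointlySmooth.pdt.continuous_x s
    rw [intervalIntegral.integral_sub ((by fun_prop : Continuous _).intervalIntegrable _ _)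
      ((by fun_prop : Continuous _).intervalIntegrable _ _), intervalIntegral.integral_div]
    rfl
  rw [← hsub, ← hsub]
  exact eq_left_of_hasDerivAt_zero
    (fun _ hs => hu.hasDerivAt_integral_norm_pdt_sq_sub hT hs) t ht

lemma integral_two_mul_inner_pdx_pdt_cross3_le {K : ℝ} (hu : IsSol T u) (ht : t ∈ Icc 0 T)
    (hp : ∀ x ∈ Icc 0 1, ‖pdx u x t‖ ^ 2 ≤ K) (hw : L2sq (fun x => pdt u x t) ≤ K) :
    ∫ x in (0 : ℝ)..1, 2 * ⟪pdx (pdt u) x t, cross3 (pdt u x t) (pdx (pdx (pdx u)) x t)⟫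
      ≤ (4 + 5 * K ^ 2) * L2sq (fun x => pdx (pdt u) x t)
        + K ^ 2 * (4 * K ^ 2 + 10 * K + 1) := by
  have hcxxx := hu.jointlySmooth.pdx.pdx.pdx.continuous_x t
  have hct := hu.jointlySmooth.pdt.continuous_x t
  have hctx := hu.jointlySmooth.pdt.pdx.continuous_x t
  have hint : ∀ {g : ℝ → ℝ}, Continuous g → IntervalIntegrable g volume 0 1 :=
    fun hg => hg.intervalIntegrable _ _
  set F := L2sq fun x => pdx (pdt u) x t
  set W := L2sq fun x => pdt u x t
  have hF₀ : 0 ≤ F := L2sq_nonneg _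
  have hW₀ : 0 ≤ W := L2sq_nonneg _
  have hK₀ : 0 ≤ K := hW₀.trans hw
  have hquartic : ∫ x in (0 : ℝ)..1, ‖pdt u x t‖ ^ 4 ≤ (2 * K + F) * K := by
    calc ∫ x in (0 : ℝ)..1, ‖pdt u x t‖ ^ 4 ≤ ((1 + 1⁻¹) * W + 1 * F) * W :=
          hu.jointlySmooth.pdt.integral_norm_pow_four_le one_pos t
      _ = (2 * W + F) * W := by norm_num
      _ ≤ (2 * K + F) * K := by gcongr
  calc ∫ x in (0 : ℝ)..1, 2 * ⟪pdx (pdt u) x t, cross3 (pdt u x t) (pdx (pdx (pdx u)) x t)⟫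
      ≤ ∫ x in (0 : ℝ)..1, (4 * ‖pdx (pdt u) x t‖ ^ 2 + 5 * K * ‖pdt u x t‖ ^ 4
          + (4 * K ^ 3 + K) * ‖pdt u x t‖ ^ 2) :=
        intervalIntegral.integral_mono_on zero_le_one (hint (by fun_prop)) (hint (by fun_prop))
          fun x hx => hu.two_mul_inner_pdx_pdt_cross3_le hx ht (hp x hx)
    _ = 4 * F + 5 * K * (∫ x in (0 : ℝ)..1, ‖pdt u x t‖ ^ 4) + (4 * K ^ 3 + K) * W := by
        rw [intervalIntegral.integral_add (hint (by fun_prop)) (hint (by fun_prop)),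
          intervalIntegral.integral_add (hint (by fun_prop)) (hint (by fun_prop))]
        simp only [intervalIntegral.integral_const_mul]
        rfl
    _ ≤ 4 * F + 5 * K * ((2 * K + F) * K) + (4 * K ^ 3 + K) * K := by gcongr
    _ = _ := by ring

end IntegralEstimates

end IsSol

/-- The bound on `2 ‖u_x‖² + ‖u_xx‖²` at all times, in `L²`, when `‖u_x‖²` and `‖u_xx‖²` are at
most `N` initially. It bounds `sup |u_x|²` as well. -/
def secondOrderBound (N : ℝ) : ℝ := 4 * N + 5 / 2 * N ^ 2 * (5 / 2 * N + 7 / 2)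

/-- The bound on `‖u_xt‖²` in `L²` up to time `T`, when the squared `L²` norms of `u_x`, `u_xx` and
`u_xxx` are at most `N` initially: the Grönwall bound for the differential inequality satisfied by
`‖u_xt‖²`. -/
def thirdOrderBound (N T : ℝ) : ℝ :=
  gronwallBound (2 * N * (secondOrderBound N + 1)) (4 + 5 * secondOrderBound N ^ 2)
    (secondOrderBound N ^ 2 * (4 * secondOrderBound N ^ 2 + 10 * secondOrderBound N + 1)) T

namespace IsSol

variable {T t x N : ℝ} {u : ℝ → ℝ → E3}

section APrioriBounds

lemma two_mul_L2sq_pdx_add_le (hu : IsSol T u) (hT : 0 < T) (ht : t ∈ Icc 0 T)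
    (h₁ : L2sq (fun x => pdx u x 0) ≤ N) (h₂ : L2sq (fun x => pdx (pdx u) x 0) ≤ N) :
    2 * L2sq (fun x => pdx u x t) + L2sq (fun x => pdx (pdx u) x t) ≤ secondOrderBound N := by
  have hE := (hu.L2sq_pdx_eq ht).trans_le h₁
  have hconserved := hu.L2sq_pdt_sub_eq hT ht
  rw [hu.L2sq_pdt_eq ht, hu.L2sq_pdt_eq (left_mem_Icc.2 hT.le)] at hconserved
  have hP₀ : 0 ≤ ∫ x in (0 : ℝ)..1, ‖pdx u x 0‖ ^ 4 :=
    intervalIntegral.integral_nonneg zero_le_one fun _ _ => by positivity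
  set E := L2sq fun x => pdx u x t
  set X := L2sq fun x => pdx (pdx u) x t
  have hE₀ : 0 ≤ E := L2sq_nonneg _
  have hX₀ : 0 ≤ X := L2sq_nonneg _
  have hN : 0 ≤ N := hE₀.trans hE
  -- This `ε` lets the `X` on the right be absorbed: `5 / 4 * (ε * X) * N ≤ X / 2`.
  have hquartic : ∫ x in (0 : ℝ)..1, ‖pdx u x t‖ ^ 4
      ≤ ((1 + (2 / (5 * (N + 1)))⁻¹) * E + 2 / (5 * (N + 1)) * X) * E :=
    hu.jointlySmooth.pdx.integral_norm_pow_four_le (by positivity) t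
  have habsorb : 5 / 4 * ∫ x in (0 : ℝ)..1, ‖pdx u x t‖ ^ 4
      ≤ 5 / 4 * N ^ 2 * (5 / 2 * N + 7 / 2) + X / 2 := by
    calc 5 / 4 * ∫ x in (0 : ℝ)..1, ‖pdx u x t‖ ^ 4
        ≤ 5 / 4 * (((1 + (2 / (5 * (N + 1)))⁻¹) * N + 2 / (5 * (N + 1)) * X) * N) := by
          grw [hquartic]
          gcongr
      _ = 5 / 4 * N ^ 2 * (5 / 2 * N + 7 / 2) + X / 2 * (N / (N + 1)) := by field_simp; ring
      _ ≤ 5 / 4 * N ^ 2 * (5 / 2 * N + 7 / 2) + X / 2 := by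
          gcongr
          exact mul_le_of_le_one_right (by linarith) (div_le_one_of_le₀ (by linarith) (by linarith))
  unfold secondOrderBound
  linarith

lemma L2sq_pdx_pdx_le (hu : IsSol T u) (hT : 0 < T) (ht : t ∈ Icc 0 T)
    (h₁ : L2sq (fun x => pdx u x 0) ≤ N) (h₂ : L2sq (fun x => pdx (pdx u) x 0) ≤ N) :
    L2sq (fun x => pdx (pdx u) x t) ≤ secondOrderBound N := by
  linarith [hu.two_mul_L2sq_pdx_add_le hT ht h₁ h₂, L2sq_nonneg fun x => pdx u x t]

lemma L2sq_pdt_le (hu : IsSol T u) (hT : 0 < T) (ht : t ∈ Icc 0 T)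
    (h₁ : L2sq (fun x => pdx u x 0) ≤ N) (h₂ : L2sq (fun x => pdx (pdx u) x 0) ≤ N) :
    L2sq (fun x => pdt u x t) ≤ secondOrderBound N := by
  have hquartic : 0 ≤ ∫ x in (0 : ℝ)..1, ‖pdx u x t‖ ^ 4 :=
    intervalIntegral.integral_nonneg zero_le_one fun _ _ => by positivity
  exact (hu.L2sq_pdt_eq ht).trans_le ((sub_le_self _ hquartic).trans
    (hu.L2sq_pdx_pdx_le hT ht h₁ h₂))

lemma norm_pdx_sq_le (hu : IsSol T u) (hT : 0 < T) (hx : x ∈ Icc 0 1) (ht : t ∈ Icc 0 T)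
    (h₁ : L2sq (fun x => pdx u x 0) ≤ N) (h₂ : L2sq (fun x => pdx (pdx u) x 0) ≤ N) :
    ‖pdx u x t‖ ^ 2 ≤ secondOrderBound N := by
  have h := hu.jointlySmooth.pdx.norm_sq_le one_pos hx t
  norm_num at h
  exact h.trans (hu.two_mul_L2sq_pdx_add_le hT ht h₁ h₂)

lemma L2sq_pdx_pdx_pdx_le (hu : IsSol T u) (hT : 0 < T) (ht : t ∈ Icc 0 T)
    (h₁ : L2sq (fun x => pdx u x 0) ≤ N) (h₂ : L2sq (fun x => pdx (pdx u) x 0) ≤ N) :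
    L2sq (fun x => pdx (pdx (pdx u)) x t)
      ≤ 2 * L2sq (fun x => pdx (pdt u) x t) + 11 * secondOrderBound N ^ 2 := by
  have hs := hu.jointlySmooth
  have hxx := hu.L2sq_pdx_pdx_le hT ht h₁ h₂
  have hK := (L2sq_nonneg _).trans hxx
  calc L2sq (fun x => pdx (pdx (pdx u)) x t)
      ≤ 2 * L2sq (fun x => pdx (pdt u) x t)
        + 11 * secondOrderBound N * L2sq (fun x => pdx (pdx u) x t) := by
        refine L2sq_le_of_norm_sq_le (hs.pdx.pdx.pdx.continuous_x t) (hs.pdt.pdx.continuous_x t)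
          (hs.pdx.pdx.continuous_x t) fun x hx => (hu.norm_pdx_pdx_pdx_sq_le hx ht).trans ?_
        grw [hu.norm_pdx_sq_le hT hx ht h₁ h₂, mul_assoc]
    _ ≤ 2 * L2sq (fun x => pdx (pdt u) x t) + 11 * secondOrderBound N * secondOrderBound N := by
        gcongr
    _ = _ := by ring

lemma L2sq_pdx_pdt_initial_le (hu : IsSol T u) (hT : 0 < T)
    (h₁ : L2sq (fun x => pdx u x 0) ≤ N) (h₂ : L2sq (fun x => pdx (pdx u) x 0) ≤ N)
    (h₃ : L2sq (fun x => pdx (pdx (pdx u)) x 0) ≤ N) :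
    L2sq (fun x => pdx (pdt u) x 0) ≤ 2 * N * (secondOrderBound N + 1) := by
  have hs := hu.jointlySmooth
  have h0 : (0 : ℝ) ∈ Icc 0 T := left_mem_Icc.2 hT.le
  have hK := (L2sq_nonneg _).trans (hu.L2sq_pdx_pdx_le hT h0 h₁ h₂)
  calc L2sq (fun x => pdx (pdt u) x 0)
      ≤ 2 * secondOrderBound N * L2sq (fun x => pdx (pdx u) x 0)
        + 2 * L2sq (fun x => pdx (pdx (pdx u)) x 0) := by
        refine L2sq_le_of_norm_sq_le (hs.pdt.pdx.continuous_x 0) (hs.pdx.pdx.continuous_x 0)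
          (hs.pdx.pdx.pdx.continuous_x 0) fun x hx => (hu.norm_pdx_pdt_sq_le hx h0).trans ?_
        grw [hu.norm_pdx_sq_le hT hx h0 h₁ h₂, mul_assoc]
    _ ≤ 2 * secondOrderBound N * N + 2 * N := by gcongr
    _ = 2 * N * (secondOrderBound N + 1) := by ring

lemma L2sq_pdx_pdt_le (hu : IsSol T u) (hT : 0 < T) (ht : t ∈ Icc 0 T)
    (h₁ : L2sq (fun x => pdx u x 0) ≤ N) (h₂ : L2sq (fun x => pdx (pdx u) x 0) ≤ N)
    (h₃ : L2sq (fun x => pdx (pdx (pdx u)) x 0) ≤ N) :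
    L2sq (fun x => pdx (pdt u) x t) ≤ thirdOrderBound N T := by
  have hinitial := hu.L2sq_pdx_pdt_initial_le hT h₁ h₂ h₃
  have hK := (L2sq_nonneg _).trans (hu.L2sq_pdx_pdx_le hT ht h₁ h₂)
  refine (le_gronwallBound_of_hasDerivAt_le (fun s hs => hu.hasDerivAt_L2sq_pdx_pdt hT hs)
    hinitial (fun s hs => hu.integral_two_mul_inner_pdx_pdt_cross3_le hs
      (fun x hx => hu.norm_pdx_sq_le hT hx hs h₁ h₂) (hu.L2sq_pdt_le hT hs h₁ h₂)) t ht).trans ?_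
  exact gronwallBound_mono ((L2sq_nonneg _).trans hinitial) (by positivity) (by positivity)
    (by linarith [ht.2])

end APrioriBounds

end IsSol

theorem H3_estimate_schrodinger_flow :
    ∃ C : ℝ → ℝ → ℝ, ∀ T > (0:ℝ), ∀ u : ℝ → ℝ → E3, IsSol T u →
      ∀ t ∈ Icc (0:ℝ) T,
        Hsq 3 (fun x => u x t) + Hsq 1 (fun x => pdt u x t)
          ≤ C (Real.sqrt (Hsq 3 (fun x => u x 0))) T := by
  refine ⟨fun s T => 1 + s ^ 2 + 2 * secondOrderBound (s ^ 2) + 11 * secondOrderBound (s ^ 2) ^ 2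
    + 3 * thirdOrderBound (s ^ 2) T, fun T hT u hu t ht => ?_⟩
  have h₁ : L2sq (fun x => pdx u x 0) ≤ Hsq 3 fun x => u x 0 :=
    L2sq_iterate_deriv_le_Hsq (j := 1) _ (by norm_num)
  have h₂ : L2sq (fun x => pdx (pdx u) x 0) ≤ Hsq 3 fun x => u x 0 :=
    L2sq_iterate_deriv_le_Hsq (j := 2) _ (by norm_num)
  have h₃ : L2sq (fun x => pdx (pdx (pdx u)) x 0) ≤ Hsq 3 fun x => u x 0 :=
    L2sq_iterate_deriv_le_Hsq (j := 3) _ le_rfl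
  have hsqrt := Real.sq_sqrt ((L2sq_nonneg _).trans h₁)
  have hnorms : Hsq 3 (fun x => u x t) + Hsq 1 (fun x => pdt u x t)
      = L2sq (fun x => u x t) + L2sq (fun x => pdx u x t) + L2sq (fun x => pdx (pdx u) x t)
        + L2sq (fun x => pdx (pdx (pdx u)) x t)
        + (L2sq (fun x => pdt u x t) + L2sq (fun x => pdx (pdt u) x t)) :=
    congrArg₂ (· + ·) (Hsq_three_eq _) (Hsq_one_eq _)
  rw [hnorms, hu.L2sq_self ht, hu.L2sq_pdx_eq ht]
  simp only [hsqrt]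
  linarith [hu.L2sq_pdx_pdx_le hT ht h₁ h₂, hu.L2sq_pdx_pdx_pdx_le hT ht h₁ h₂,
    hu.L2sq_pdt_le hT ht h₁ h₂, hu.L2sq_pdx_pdt_le hT ht h₁ h₂ h₃]

end
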